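/- Let Q be a loop (a quasigroup with a two-sided identity element 1) satisfying the identity (x·x)·(a·b) = (x·a)·(x·b) for all x, a, b ∈ Q. Then Q is commutative: a·b = b·a for all a, b ∈ Q. -/

import Mathlib

/-- A (binary operation on a nonempty set is a) quasigroup: all left and right
translations are bijections. -/
def IsQuasigroup {Q : Type*} (mul : Q → Q → Q) : Prop :=
  Nonempty Q ∧ ∀ a : Q,
    Function.Bijective (fun x => mul a x) ∧ Function.Bijective (fun x => mul x a)

theorem mul_comm_self_mul_of_mul_self_distrib {Q : Type*} {mul : Q → Q → Q} {e : Q}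
    (he : ∀ y : Q, mul e y = y ∧ mul y e = y) {x : Q}
    (hx : ∀ a b : Q, mul (mul x x) (mul a b) = mul (mul x a) (mul x b)) (b : Q) :
    mul x (mul x b) = mul (mul x b) x :=
  calc
    mul x (mul x b) = mul (mul x e) (mul x b) := by rw [(he x).2]
    _ = mul (mul x x) (mul e b) := (hx e b).symm
    _ = mul (mul x x) (mul b e) := by rw [(he b).1, (he b).2]
    _ = mul (mul x b) (mul x e) := hx b e
    _ = mul (mul x b) x := by rw [(he x).2]

theorem loop_distributive_law_implies_commutative_general {Q : Type*} (mul : Q → Q → Q)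
    (hsurj : ∀ a : Q, Function.Surjective (mul a)) (e : Q)
    (he : ∀ x : Q, mul e x = x ∧ mul x e = x)
    (h : ∀ x a b : Q, mul (mul x x) (mul a b) = mul (mul x a) (mul x b)) :
    ∀ a b : Q, mul a b = mul b a := by
  intro a b
  obtain ⟨c, rfl⟩ := hsurj a b
  exact mul_comm_self_mul_of_mul_self_distrib he (h a) c

/-- A loop (quasigroup with a two-sided unit) satisfying `(x·x)·(a·b) = (x·a)·(x·b)`
is commutative. -/
theorem loop_distributive_law_implies_commutative {Q : Type*} (mul : Q → Q → Q)
    (hQ : IsQuasigroup mul) (e : Q)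
    (he : ∀ x : Q, mul e x = x ∧ mul x e = x)
    (h : ∀ x a b : Q, mul (mul x x) (mul a b) = mul (mul x a) (mul x b)) :
    ∀ a b : Q, mul a b = mul b a :=
  loop_distributive_law_implies_commutative_general mul (fun a => (hQ.2 a).1.surjective) e he h
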